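/- Soundness of the tableau procedure: if the ELKh_n formula φ0 is satisfiable (some pointed model satisfies φ0), then the tableau T_{φ0} is not closed, i.e. some complete subtree of T_{φ0} contains no node whose label is blatantly inconsistent. -/

import Mathlib

/-!
Formalization of the logic of strategically knowing how (ELKh_n) and of the
tableau procedure for it.
-/

namespace ELKh

/-- Formulas of the language ELKh_n:
`φ ::= ⊥ | p | ¬φ | (φ ∧ φ) | K_i φ | Kh_i φ`. -/
inductive Formula (P I : Type) : Type
  | bot : Formula P I
  | atom : P → Formula P I
  | neg : Formula P I → Formula P I
  | and : Formula P I → Formula P I → Formula P I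
  | know : I → Formula P I → Formula P I
  | kh : I → Formula P I → Formula P I

variable {P I : Type}

/-- Models of ELKh_n: states with equivalence relations `∼ᵢ`, actions for each
agent, a transition relation for each action, and a valuation. -/
structure Model (P I : Type) where
  W : Type
  sim : I → W → W → Prop
  equiv : ∀ i, Equivalence (sim i)
  Act : I → Type
  R : (i : I) → Act i → W → W → Prop
  V : W → P → Prop

/-- Transition between `i`-equivalence classes (classes are represented by
member states): `[s]ⁱ →ₐ [t]ⁱ` iff some `s' ∈ [s]ⁱ`, `t' ∈ [t]ⁱ` have `R a s' t'`. -/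
def Model.ctrans (M : Model P I) (i : I) (a : M.Act i) (s t : M.W) : Prop :=
  ∃ s' t', M.sim i s s' ∧ M.sim i t t' ∧ M.R i a s' t'

/-- Uniformly executable strategies for agent `i`: partial functions from
`∼ᵢ`-equivalence classes to actions of `i` (hence constant on classes), whose
chosen action is executable at every member of the class. -/
structure Strategy (M : Model P I) (i : I) where
  act : M.W → Option (M.Act i)
  congr : ∀ s t, M.sim i s t → act s = act t
  exec : ∀ s a, act s = some a → ∀ t, M.sim i s t → ∃ u, M.R i a t u

namespace Strategy

variable {M : Model P I} {i : I}

/-- The `k`-th step of the sequence of classes `[δ 0][δ 1]⋯` is a σ-step. -/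
def Steps (σ : Strategy M i) (δ : ℕ → M.W) (k : ℕ) : Prop :=
  ∃ a, σ.act (δ k) = some a ∧ M.ctrans i a (δ k) (δ (k+1))

/-- `[δ 0]⋯[δ h]` is a (finite) possible execution of σ. -/
def FinExec (σ : Strategy M i) (δ : ℕ → M.W) (h : ℕ) : Prop :=
  ∀ k < h, σ.Steps δ k

/-- `[δ 0]⋯[δ h]` is a complete finite execution of σ (its end class is not in
the domain of σ). -/
def CompleteFinExec (σ : Strategy M i) (δ : ℕ → M.W) (h : ℕ) : Prop :=
  σ.FinExec δ h ∧ σ.act (δ h) = none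

/-- `[δ 0][δ 1]⋯` is an infinite possible execution of σ (such an execution is
automatically complete). -/
def InfExec (σ : Strategy M i) (δ : ℕ → M.W) : Prop :=
  ∀ k, σ.Steps δ k

end Strategy

/-- Satisfaction for ELKh_n.  `Kh_i φ` holds at `s` iff there is a strategy σ
for `i` such that all complete executions of σ starting from `[s]ⁱ` are finite
(equivalently: there is no infinite execution of σ from `[s]ⁱ`) and every state
of every end class of a complete (finite) execution from `[s]ⁱ` satisfies `φ`. -/
def Sat (M : Model P I) : M.W → Formula P I → Prop
  | _, .bot => False
  | s, .atom p => M.V s p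
  | s, .neg φ => ¬ Sat M s φ
  | s, .and φ ψ => Sat M s φ ∧ Sat M s ψ
  | s, .know i φ => ∀ t, M.sim i s t → Sat M t φ
  | s, .kh i φ => ∃ σ : Strategy M i,
      (∀ δ : ℕ → M.W, M.sim i s (δ 0) → ¬ σ.InfExec δ) ∧
      (∀ (δ : ℕ → M.W) (h : ℕ), M.sim i s (δ 0) → σ.CompleteFinExec δ h →
        ∀ t, M.sim i (δ h) t → Sat M t φ)

/-! ### Subformulas -/

/-- The set of subformulas of a formula. -/
def subf : Formula P I → Set (Formula P I)
  | .bot => {Formula.bot}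
  | .atom p => {Formula.atom p}
  | .neg φ => insert (Formula.neg φ) (subf φ)
  | .and φ ψ => insert (Formula.and φ ψ) (subf φ ∪ subf ψ)
  | .know i φ => insert (Formula.know i φ) (subf φ)
  | .kh i φ => insert (Formula.kh i φ) (subf φ)

/-- `sub⁺(φ₀) = {ψ, ¬ψ : ψ subformula of φ₀} ∪ {Kᵢψ, ¬Kᵢψ : Khᵢψ subformula of φ₀}`. -/
def subPlus (φ0 : Formula P I) : Set (Formula P I) :=
  {χ | ∃ ψ ∈ subf φ0, χ = ψ ∨ χ = Formula.neg ψ} ∪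
  {χ | ∃ i ψ, Formula.kh i ψ ∈ subf φ0 ∧
      (χ = Formula.know i ψ ∨ χ = Formula.neg (Formula.know i ψ))}

/-- `∼ψ`:  `∼¬χ = χ`, and `∼ψ = ¬ψ` otherwise. -/
def simNeg : Formula P I → Formula P I
  | .neg χ => χ
  | ψ => Formula.neg ψ

/-! ### Labeled trees -/

/-- Labels of tableau edges: `ε`, an agent `i`, or an action `a_{Khᵢψ}`. -/
inductive ELabel (P I : Type) : Type
  | eps : ELabel P I
  | ag : I → ELabel P I
  | act : I → Formula P I → ELabel P I

/-- Labeled rooted trees: each node is labeled with a set of formulas, each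
non-root node carries the label of the edge connecting it to its parent, and
`blockedBy n = some n'` records that the node `n` is blocked by `n'`. -/
structure LTree (P I : Type) where
  Node : Type
  root : Node
  parent : Node → Option Node
  depth : Node → ℕ
  label : Node → Set (Formula P I)
  elabel : Node → ELabel P I
  blockedBy : Node → Option Node
  parent_root : parent root = none
  eq_root : ∀ n, parent n = none → n = root
  depth_root : depth root = 0
  depth_parent : ∀ n m, parent n = some m → depth n = depth m + 1

variable (T : LTree P I)

/-- The children of a node. -/
def Children (n : T.Node) : Set T.Node := {m | T.parent m = some n}

/-- A node is a leaf iff it has no children. -/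
def IsLeaf (n : T.Node) : Prop := ∀ m, T.parent m ≠ some n

/-- `Ancestor T m n`: `m` is a proper ancestor of `n`. -/
def Ancestor (m n : T.Node) : Prop :=
  Relation.TransGen (fun a b => T.parent b = some a) m n

/-- `IAnc T i m n`: `m` is an `i`-ancestor of `n`, i.e. a proper ancestor of
`n` connected to `n` by a path all of whose edges are labeled `i` or `ε`. -/
inductive IAnc (i : I) : T.Node → T.Node → Prop
  | single {m n} : T.parent n = some m →
      (T.elabel n = ELabel.eps ∨ T.elabel n = ELabel.ag i) → IAnc i m n
  | cons {m k n} : T.parent n = some k →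
      (T.elabel n = ELabel.eps ∨ T.elabel n = ELabel.ag i) →
      IAnc i m k → IAnc i m n

/-! ### The tableau construction -/

/-- A set of formulas is blatantly inconsistent iff it contains `⊥` or some
pair `ψ, ¬ψ`. -/
def Blatant (Γ : Set (Formula P I)) : Prop :=
  Formula.bot ∈ Γ ∨ ∃ ψ, ψ ∈ Γ ∧ Formula.neg ψ ∈ Γ

/-- `AutoChecked Γ φ` holds iff none of the expansion rules (a)-(g) is
applicable to `φ` in the label `Γ`; such formulas are (and remain) marked
``checked'' by step (h) of the construction. -/
def AutoChecked (Γ : Set (Formula P I)) : Formula P I → Prop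
  | .neg (.neg ψ) => ψ ∈ Γ
  | .and ψ χ => ψ ∈ Γ ∧ χ ∈ Γ
  | .neg (.and ψ χ) =>
      (Formula.neg ψ ∈ Γ ∧ Formula.neg χ ∈ Γ) ∨
      (Formula.neg ψ ∈ Γ ∧ χ ∈ Γ) ∨ (ψ ∈ Γ ∧ Formula.neg χ ∈ Γ)
  | .know _ ψ => ψ ∈ Γ
  | .neg (.know _ ψ) => Formula.neg ψ ∈ Γ ∨ ψ ∈ Γ
  | .kh i ψ => Formula.neg (Formula.know i ψ) ∈ Γ ∨ Formula.know i ψ ∈ Γ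
  | .neg (.kh i ψ) => Formula.neg (Formula.know i ψ) ∈ Γ
  | _ => True

/-- All formulas of `Γ` are checked; nodes with such labels are the ``and''
nodes (expanded by step (2)), the remaining expanded nodes are ``or'' nodes. -/
def Saturated (Γ : Set (Formula P I)) : Prop := ∀ φ ∈ Γ, AutoChecked Γ φ

/-- The labels of the children created when one of the rules (a)-(g) processes
the formula `φ` at a node labeled `Γ`. -/
def orOut (Γ : Set (Formula P I)) : Formula P I → Set (Set (Formula P I))
  | .neg (.neg ψ) => {insert ψ Γ}
  | .and ψ χ => {insert ψ (insert χ Γ)}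
  | .neg (.and ψ χ) =>
      {insert (Formula.neg ψ) (insert (Formula.neg χ) Γ),
       insert (Formula.neg ψ) (insert χ Γ),
       insert ψ (insert (Formula.neg χ) Γ)}
  | .know _ ψ => {insert ψ Γ}
  | .neg (.know _ ψ) => {insert (Formula.neg ψ) Γ, insert ψ Γ}
  | .kh i ψ =>
      {insert (Formula.neg (Formula.know i ψ)) Γ, insert (Formula.know i ψ) Γ}
  | .neg (.kh i ψ) => {insert (Formula.neg (Formula.know i ψ)) Γ}
  | _ => ∅

/-- `Σ(n,¬Kᵢψ) = {¬ψ} ∪ Γ|Kᵢ ∪ Γ|¬Kᵢ ∪ Γ|Khᵢ ∪ Γ|¬Khᵢ` where `Γ = L(n)`. -/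
def SigmaSet (Γ : Set (Formula P I)) (i : I) (ψ : Formula P I) :
    Set (Formula P I) :=
  insert (Formula.neg ψ)
    {φ ∈ Γ | (∃ χ, φ = Formula.know i χ) ∨ (∃ χ, φ = Formula.neg (Formula.know i χ)) ∨
             (∃ χ, φ = Formula.kh i χ) ∨ (∃ χ, φ = Formula.neg (Formula.kh i χ))}

/-- Expansion condition for ``or'' nodes (step (1), rules (a)-(g)): some
unchecked formula of the label is processed and the children of the node are
exactly the prescribed `ε`-children. -/
def OrNodeCond (n : T.Node) : Prop :=
  ∃ φ ∈ T.label n, ¬ AutoChecked (T.label n) φ ∧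
    (∀ Δ ∈ orOut (T.label n) φ,
      ∃ m, T.parent m = some n ∧ T.elabel m = ELabel.eps ∧ T.label m = Δ ∧
        T.blockedBy m = none) ∧
    (∀ m, T.parent m = some n →
      T.elabel m = ELabel.eps ∧ T.label m ∈ orOut (T.label n) φ ∧
        T.blockedBy m = none)

/-- Expansion condition for ``and'' nodes (step (2), rules (i), (j), (k)): the
children of the node are exactly those prescribed by the three rules, and a
(k)-child is blocked iff some ancestor carries the same label. -/
def AndNodeCond (n : T.Node) : Prop :=
  (∀ i ψ, Formula.neg (Formula.know i ψ) ∈ T.label n →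
    ¬ (∃ n', IAnc T i n' n ∧ T.label n' = SigmaSet (T.label n) i ψ) →
    ∃ m, T.parent m = some n ∧ T.elabel m = ELabel.ag i ∧
      T.label m = SigmaSet (T.label n) i ψ ∧ T.blockedBy m = none) ∧
  (∀ i ψ, Formula.kh i ψ ∈ T.label n → Formula.neg (Formula.know i ψ) ∈ T.label n →
    ∃ m, T.parent m = some n ∧ T.elabel m = ELabel.act i ψ ∧
      T.label m = {Formula.know i ψ} ∧ T.blockedBy m = none) ∧
  (∀ i ψ χ, Formula.neg (Formula.kh i χ) ∈ T.label n →
    Formula.kh i ψ ∈ T.label n → Formula.neg (Formula.know i ψ) ∈ T.label n →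
    ∃ m, T.parent m = some n ∧ T.elabel m = ELabel.act i ψ ∧
      T.label m = {Formula.know i ψ, Formula.neg (Formula.kh i χ)} ∧
      ((∃ n', Ancestor T n' m ∧ T.label n' = T.label m) ↔ T.blockedBy m ≠ none)) ∧
  (∀ m, T.parent m = some n →
    (∃ i ψ, T.elabel m = ELabel.ag i ∧ Formula.neg (Formula.know i ψ) ∈ T.label n ∧
      T.label m = SigmaSet (T.label n) i ψ ∧
      ¬ (∃ n', IAnc T i n' n ∧ T.label n' = SigmaSet (T.label n) i ψ)) ∨
    (∃ i ψ, T.elabel m = ELabel.act i ψ ∧ Formula.kh i ψ ∈ T.label n ∧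
      Formula.neg (Formula.know i ψ) ∈ T.label n ∧
      T.label m = {Formula.know i ψ}) ∨
    (∃ i ψ χ, T.elabel m = ELabel.act i ψ ∧ Formula.neg (Formula.kh i χ) ∈ T.label n ∧
      Formula.kh i ψ ∈ T.label n ∧ Formula.neg (Formula.know i ψ) ∈ T.label n ∧
      T.label m = {Formula.know i ψ, Formula.neg (Formula.kh i χ)}))

/-- `T` is a tableau for `φ₀`: the root is labeled `{φ₀}`, blocked nodes are
blocked by an ancestor with the same label, blocked nodes and blatantly
inconsistent nodes are leaves, and every other node is expanded according to
step (1) (``or'' nodes) or step (2) (``and'' nodes) of the construction. -/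
structure IsTableau (φ0 : Formula P I) (T : LTree P I) : Prop where
  root_label : T.label T.root = {φ0}
  blocked_spec : ∀ n n', T.blockedBy n = some n' →
    Ancestor T n' n ∧ T.label n' = T.label n
  blocked_leaf : ∀ n, T.blockedBy n ≠ none → IsLeaf T n
  blatant_leaf : ∀ n, Blatant (T.label n) → IsLeaf T n
  or_node : ∀ n, ¬ Blatant (T.label n) → T.blockedBy n = none →
    ¬ Saturated (T.label n) → OrNodeCond T n
  and_node : ∀ n, ¬ Blatant (T.label n) → T.blockedBy n = none →
    Saturated (T.label n) → AndNodeCond T n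

/-! ### Subtrees -/

/-- A subtree: a set of nodes containing the root and closed under parents. -/
def IsSubtree (S : Set T.Node) : Prop :=
  T.root ∈ S ∧ ∀ n ∈ S, ∀ m, T.parent n = some m → m ∈ S

/-- A complete subtree: it contains the root, all children of each of its
``and'' non-leaf nodes, and at least one child of each of its ``or'' non-leaf
nodes. -/
def CompleteSubtree (S : Set T.Node) : Prop :=
  IsSubtree T S ∧
  (∀ n ∈ S, ¬ IsLeaf T n → Saturated (T.label n) → ∀ m ∈ Children T n, m ∈ S) ∧
  (∀ n ∈ S, ¬ IsLeaf T n → ¬ Saturated (T.label n) → ∃ m ∈ Children T n, m ∈ S)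

/-- A subtree is closed iff some of its nodes has a blatantly inconsistent
label; otherwise it is open. -/
def ClosedSubtree (S : Set T.Node) : Prop := ∃ n ∈ S, Blatant (T.label n)

/-- A tableau is closed iff all its complete subtrees are closed. -/
def TableauClosed : Prop := ∀ S : Set T.Node, CompleteSubtree T S → ClosedSubtree T S

/-! ### Maximal ε-paths and the induced model -/

/-- An `ε`-edge from `m` down to `n` inside the node set `S`. -/
def EpsStep (S : Set T.Node) (m n : T.Node) : Prop :=
  m ∈ S ∧ n ∈ S ∧ T.parent n = some m ∧ T.elabel n = ELabel.eps

/-- `n` is an `ε`-descendant of `m` inside `S` (reflexive-transitive). -/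
def EpsDesc (S : Set T.Node) : T.Node → T.Node → Prop :=
  Relation.ReflTransGen (EpsStep T S)

/-- A maximal `ε`-path of the subtree with node set `S`, recorded by its
initial node `top` and its end node `bot`.  Its label is `T.label bot`. -/
structure MaxEpsPath (T : LTree P I) (S : Set T.Node) where
  top : T.Node
  bot : T.Node
  top_mem : top ∈ S
  bot_mem : bot ∈ S
  desc : EpsDesc T S top bot
  top_max : ∀ m, ¬ EpsStep T S m top
  bot_max : ∀ m, ¬ EpsStep T S bot m

/-- The states of the induced model: non-blocked maximal `ε`-paths. -/
def PathW (T : LTree P I) (S : Set T.Node) : Type :=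
  {ρ : MaxEpsPath T S // T.blockedBy ρ.bot = none}

/-- `ρ₂` is an `i`-child path of `ρ₁`: `ρ₁ρ₂` is a path whose connecting edge
is labeled `i`. -/
def ISimStep (S : Set T.Node) (i : I) (ρ1 ρ2 : PathW T S) : Prop :=
  T.parent ρ2.1.top = some ρ1.1.bot ∧ T.elabel ρ2.1.top = ELabel.ag i

/-- The node `n'` lies on the maximal `ε`-path `ρ`. -/
def OnPath (S : Set T.Node) (ρ : MaxEpsPath T S) (n' : T.Node) : Prop :=
  EpsDesc T S ρ.top n' ∧ EpsDesc T S n' ρ.bot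

/-- The model `M^T` induced by the (complete) subtree with node set `S`:
states are the non-blocked maximal `ε`-paths, `∼ᵢ` is the least equivalence
relation containing the `i`-edge steps, actions of agent `i` are the actions
`a_{Khᵢψ}` labeling edges of the subtree, `(ρ, ρ') ∈ R_a` iff there is an
`a`-edge from the end of `ρ` to the start of a maximal `ε`-path `ρ''` where
`ρ'' = ρ'` or `ρ''` is blocked by a node lying on `ρ'`, and `ρ ∈ V(p)` iff
`p ∈ L(ρ)`. -/
def inducedModel (T : LTree P I) (S : Set T.Node) : Model P I where
  W := PathW T S
  sim := fun i => Relation.EqvGen (ISimStep T S i)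
  equiv := fun _ => Relation.EqvGen.is_equivalence _
  Act := fun i => {ψ : Formula P I // ∃ m n, m ∈ S ∧ n ∈ S ∧
    T.parent m = some n ∧ T.elabel m = ELabel.act i ψ}
  R := fun i a ρ1 ρ2 => ∃ ρ'' : MaxEpsPath T S,
    T.parent ρ''.top = some ρ1.1.bot ∧ T.elabel ρ''.top = ELabel.act i a.1 ∧
    (ρ'' = ρ2.1 ∨ ∃ n', T.blockedBy ρ''.bot = some n' ∧ OnPath T S ρ2.1 n')
  V := fun ρ p => Formula.atom p ∈ T.label ρ.1.bot

/-- `L(ρ)|Kᵢ`: the `Kᵢ`-formulas of `Γ`. -/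
def projK (i : I) (Γ : Set (Formula P I)) : Set (Formula P I) :=
  {φ ∈ Γ | ∃ ψ, φ = Formula.know i ψ}

/-- `L(ρ)|¬Kᵢ`: the `¬Kᵢ`-formulas of `Γ`. -/
def projNK (i : I) (Γ : Set (Formula P I)) : Set (Formula P I) :=
  {φ ∈ Γ | ∃ ψ, φ = Formula.neg (Formula.know i ψ)}

/-- `L(ρ)|Khᵢ`: the `Khᵢ`-formulas of `Γ`. -/
def projKh (i : I) (Γ : Set (Formula P I)) : Set (Formula P I) :=
  {φ ∈ Γ | ∃ ψ, φ = Formula.kh i ψ}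

/-- `L(ρ)|¬Khᵢ`: the `¬Khᵢ`-formulas of `Γ`. -/
def projNKh (i : I) (Γ : Set (Formula P I)) : Set (Formula P I) :=
  {φ ∈ Γ | ∃ ψ, φ = Formula.neg (Formula.kh i ψ)}

/-!
Satisfiability is passed down the tableau: at a state satisfying the label of an or-node, one of
the alternatives offered by the rule is true, and the labels of all children of a satisfiable
and-node are satisfiable. So the nodes that are reached from the root through satisfiable labels
form a complete subtree, and satisfiable labels are not blatantly inconsistent.

The delicate rule is (k), which needs a state of `Kᵢψ ∧ ¬Khᵢχ` whenever `Khᵢψ ∧ ¬Khᵢχ` is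
satisfiable. It follows from the validity of `KhᵢKhᵢχ → Khᵢχ`: a strategy for `ψ` all of whose end
classes satisfied `Khᵢχ` could be continued to one for `χ`. Its end classes may call for
different continuations, and strategies have no memory, so one needs a single strategy that
works wherever any strategy does. Following at each class the least successful strategy of a
fixed well-order has this property, since along an execution the strategy followed can only
decrease and hence is eventually constant.
-/

namespace Strategy

variable {M : Model P I} {i : I} {σ τ : Strategy M i} {X Y : Set M.W} {s t u : M.W}

/-- The `σ`-steps between `∼ᵢ`-classes, represented by member states: `Steps δ k` says that
`Step (δ k) (δ (k + 1))`. -/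
def Step (σ : Strategy M i) (s t : M.W) : Prop :=
  ∃ a, σ.act s = some a ∧ M.ctrans i a s t

theorem Step.congr_left (hst : M.sim i s t) (h : σ.Step s u) : σ.Step t u := by
  obtain ⟨a, ha, s', u', hs', hu', hR⟩ := h
  exact ⟨a, σ.congr s t hst ▸ ha, s', u', (M.equiv i).trans ((M.equiv i).symm hst) hs', hu', hR⟩

theorem Step.congr_right (htu : M.sim i t u) (h : σ.Step s t) : σ.Step s u := by
  obtain ⟨a, ha, s', t', hs', ht', hR⟩ := h
  exact ⟨a, ha, s', t', hs', (M.equiv i).trans ((M.equiv i).symm htu) ht', hR⟩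

theorem exists_step (h : σ.act s ≠ none) : ∃ t, σ.Step s t := by
  obtain ⟨a, ha⟩ := Option.ne_none_iff_exists'.mp h
  obtain ⟨t, hR⟩ := σ.exec s a ha s ((M.equiv i).refl s)
  exact ⟨t, a, ha, s, t, (M.equiv i).refl s, (M.equiv i).refl t, hR⟩

/-- `σ` brings about `X` from `[s]ⁱ`: all its executions terminate, in classes contained in `X`.
The inductive definition replaces executions by well-founded recursion along `σ`-steps; see
`achieves_iff_executions`. -/
inductive Achieves (σ : Strategy M i) (X : Set M.W) : M.W → Prop
  | intro {s : M.W} (hend : σ.act s = none → ∀ t, M.sim i s t → t ∈ X)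
      (hstep : ∀ t, σ.Step s t → Achieves σ X t) : Achieves σ X s

namespace Achieves

theorem mem_of_act_eq_none (h : σ.Achieves X s) (hs : σ.act s = none) (hst : M.sim i s t) :
    t ∈ X :=
  let ⟨hend, _⟩ := h
  hend hs t hst

theorem of_step (h : σ.Achieves X s) (hst : σ.Step s t) : σ.Achieves X t :=
  let ⟨_, hstep⟩ := h
  hstep t hst

theorem of_sim (h : σ.Achieves X s) (hst : M.sim i s t) : σ.Achieves X t :=
  ⟨fun ht _ htu => h.mem_of_act_eq_none (σ.congr s t hst ▸ ht) ((M.equiv i).trans hst htu),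
    fun _ htu => h.of_step (htu.congr_left ((M.equiv i).symm hst))⟩

theorem not_infExec (h : σ.Achieves X s) {δ : ℕ → M.W} (hδ : M.sim i s (δ 0)) :
    ¬ σ.InfExec δ := by
  intro hinf
  induction h generalizing δ with
  | intro _ _ ih =>
    have hstep : σ.Step _ (δ 1) := Step.congr_left ((M.equiv i).symm hδ) (hinf 0)
    exact ih _ hstep (δ := fun k => δ (k + 1)) ((M.equiv i).refl _) fun k => hinf (k + 1)

theorem mem_of_completeFinExec (h : σ.Achieves X s) {δ : ℕ → M.W} {n : ℕ}
    (hδ : M.sim i s (δ 0)) (hn : σ.CompleteFinExec δ n) (ht : M.sim i (δ n) t) : t ∈ X := by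
  induction n generalizing s δ with
  | zero => exact (h.of_sim hδ).mem_of_act_eq_none hn.2 ht
  | succ n ih =>
    have hstep : σ.Step (δ 0) (δ 1) := hn.1 0 n.succ_pos
    exact ih ((h.of_sim hδ).of_step hstep) (δ := fun k => δ (k + 1)) ((M.equiv i).refl _)
      ⟨fun k hk => hn.1 (k + 1) (Nat.succ_lt_succ hk), hn.2⟩ ht

theorem of_executions (hinf : ∀ δ : ℕ → M.W, M.sim i s (δ 0) → ¬ σ.InfExec δ)
    (hfin : ∀ (δ : ℕ → M.W) (n : ℕ), M.sim i s (δ 0) → σ.CompleteFinExec δ n →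
      ∀ t, M.sim i (δ n) t → t ∈ X) : σ.Achieves X s := by
  have hacc : Acc (fun t s => σ.Step s t) s :=
    acc_iff_isEmpty_descending_chain.mpr
      ⟨fun ⟨δ, h0, hδ⟩ => hinf δ (h0 ▸ (M.equiv i).refl s) hδ⟩
  clear hinf
  induction hacc with
  | intro s _ ih =>
    refine ⟨fun hs => hfin (fun _ => s) 0 ((M.equiv i).refl s) ⟨by simp [FinExec], hs⟩,
      fun t hst => ih t hst fun δ n hδ hn => ?_⟩
    let δ' : ℕ → M.W := fun | 0 => s | k + 1 => δ k
    refine hfin δ' (n + 1) ((M.equiv i).refl s) ⟨?_, hn.2⟩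
    rintro (_ | k) hk
    · exact hst.congr_right hδ
    · exact hn.1 k (Nat.lt_of_succ_lt_succ hk)

theorem mono (h : σ.Achieves X s) (hXY : X ⊆ Y) : σ.Achieves Y s := by
  induction h with
  | intro hend _ ih => exact ⟨fun hs t hst => hXY (hend hs t hst), ih⟩

theorem forall_sim (h : σ.Achieves X s) : σ.Achieves {t | ∀ u, M.sim i t u → u ∈ X} s := by
  induction h with
  | intro hend _ ih =>
    exact ⟨fun hs t hst u htu => hend hs u ((M.equiv i).trans hst htu), ih⟩

theorem nonempty (h : σ.Achieves X s) : X.Nonempty := by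
  induction h with
  | @intro s hend _ ih =>
    by_cases hs : σ.act s = none
    · exact ⟨s, hend hs s ((M.equiv i).refl s)⟩
    · obtain ⟨t, hst⟩ := exists_step hs
      exact ih t hst

end Achieves

theorem achieves_iff_executions : σ.Achieves X s ↔
    (∀ δ : ℕ → M.W, M.sim i s (δ 0) → ¬ σ.InfExec δ) ∧
    (∀ (δ : ℕ → M.W) (n : ℕ), M.sim i s (δ 0) → σ.CompleteFinExec δ n →
      ∀ t, M.sim i (δ n) t → t ∈ X) :=
  ⟨fun h => ⟨fun _ => h.not_infExec, fun _ _ hδ hn _ => h.mem_of_completeFinExec hδ hn⟩,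
    fun h => .of_executions h.1 h.2⟩

theorem achieves_congr (hst : M.sim i s t) : σ.Achieves X s ↔ σ.Achieves X t :=
  ⟨fun h => h.of_sim hst, fun h => h.of_sim ((M.equiv i).symm hst)⟩

/-- The nowhere defined strategy, whose executions stop immediately. -/
def idle (M : Model P I) (i : I) : Strategy M i where
  act _ := none
  congr _ _ _ := rfl
  exec := by simp

theorem idle_achieves (h : ∀ t, M.sim i s t → t ∈ X) : (idle M i).Achieves X s :=
  ⟨fun _ => h, by simp [Step, idle]⟩

/-- The strategy that at each class `[s]ⁱ` acts like `c s`. -/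
def glue (c : M.W → Strategy M i) (hc : ∀ s t, M.sim i s t → c s = c t) : Strategy M i where
  act s := (c s).act s
  congr s t hst := hc s t hst ▸ (c s).congr s t hst
  exec s := (c s).exec s

/-- Along an execution the strategy followed can only decrease, and while it does not change
the execution is one of that strategy. -/
theorem glue_achieves [PartialOrder (Strategy M i)] [WellFoundedLT (Strategy M i)]
    {c : M.W → Strategy M i} (hc : ∀ s t, M.sim i s t → c s = c t) {D : Set M.W}
    (hX : ∀ s ∈ D, (c s).Achieves X s)
    (hD : ∀ s ∈ D, ∀ t, (c s).Step s t → t ∈ D ∧ c t ≤ c s) (hs : s ∈ D) :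
    (glue c hc).Achieves X s := by
  suffices ∀ ρ : Strategy M i, ∀ s ∈ D, c s = ρ → ρ.Achieves X s → (glue c hc).Achieves X s from
    this _ s hs rfl (hX s hs)
  intro ρ
  induction ρ using WellFoundedLT.induction with
  | ind ρ ih_lt =>
    intro s hs hsρ h
    induction h with
    | @intro s hend _ ih_step =>
      subst hsρ
      refine ⟨hend, fun t hst => ?_⟩
      obtain ⟨ht, hle⟩ := hD s hs t hst
      rcases hle.lt_or_eq with hlt | heq
      · exact ih_lt _ hlt t ht rfl (hX t ht)
      · exact ih_step t hst ht heq

theorem exists_uniform_achieves (M : Model P I) (i : I) (X : Set M.W) :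
    ∃ τ : Strategy M i, ∀ s, (∃ σ : Strategy M i, σ.Achieves X s) → τ.Achieves X s := by
  obtain ⟨_, _⟩ := exists_wellFoundedLT (Strategy M i)
  have exists_least (A : Set (Strategy M i)) : ∃ ρ, ∀ σ ∈ A, ρ ∈ A ∧ ρ ≤ σ := by
    rcases A.eq_empty_or_nonempty with rfl | hA
    · exact ⟨idle M i, by simp⟩
    · obtain ⟨ρ, hρ, hmin⟩ := wellFounded_lt.has_min A hA
      exact ⟨ρ, fun σ hσ => ⟨hρ, not_lt.mp (hmin σ hσ)⟩⟩
  choose least least_spec using exists_least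
  let achieving (s : M.W) : Set (Strategy M i) := {σ | σ.Achieves X s}
  have achieving_congr (s t : M.W) (hst : M.sim i s t) : achieving s = achieving t :=
    Set.ext fun _ => achieves_congr hst
  have least_achieves {s : M.W} (hs : ∃ σ : Strategy M i, σ.Achieves X s) :
      (least (achieving s)).Achieves X s :=
    let ⟨σ, hσ⟩ := hs
    (least_spec (achieving s) σ hσ).1
  refine ⟨glue (fun s => least (achieving s)) fun s t hst => by rw [achieving_congr s t hst],
    fun s hs => glue_achieves _ (D := {s | ∃ σ : Strategy M i, σ.Achieves X s})
      (fun s hs => least_achieves hs) (fun s hs t hst => ?_) hs⟩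
  have ht : (least (achieving s)).Achieves X t := (least_achieves hs).of_step hst
  exact ⟨⟨_, ht⟩, (least_spec _ _ ht).2⟩

open Classical in
/-- The strategy that acts like `σ` until it reaches a class from which `τ` achieves `X`, and
like `τ` from then on. -/
noncomputable def andThen (σ τ : Strategy M i) (X : Set M.W) : Strategy M i :=
  glue (fun s => if τ.Achieves X s then τ else σ) fun s t hst => by
    simp only [achieves_congr hst]

theorem andThen_act_of_achieves (h : τ.Achieves X s) : (σ.andThen τ X).act s = τ.act s := by
  simp [andThen, glue, h]

theorem andThen_act_of_not_achieves (h : ¬ τ.Achieves X s) :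
    (σ.andThen τ X).act s = σ.act s := by
  simp [andThen, glue, h]

theorem Achieves.andThen_of_right (h : τ.Achieves X s) : (σ.andThen τ X).Achieves X s := by
  induction h with
  | intro hend hstep ih =>
    have hact := andThen_act_of_achieves (σ := σ) ⟨hend, hstep⟩
    exact ⟨fun hs => hend (hact ▸ hs), fun t ⟨a, ha, hst⟩ => ih t ⟨a, hact ▸ ha, hst⟩⟩

theorem Achieves.andThen (h : σ.Achieves {t | τ.Achieves X t} s) :
    (σ.andThen τ X).Achieves X s := by
  induction h with
  | @intro s hend _ ih =>
    by_cases hs : τ.Achieves X s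
    · exact hs.andThen_of_right
    · have hact := andThen_act_of_not_achieves (σ := σ) hs
      exact ⟨fun hnone => absurd (hend (hact ▸ hnone) s ((M.equiv i).refl s)) hs,
        fun t ⟨a, ha, hst⟩ => ih t ⟨a, hact ▸ ha, hst⟩⟩

end Strategy

section Validities

variable {M : Model P I} {i : I} {s t : M.W} {φ ψ χ : Formula P I}

theorem sat_kh_iff_exists_achieves :
    Sat M s (.kh i φ) ↔ ∃ σ : Strategy M i, σ.Achieves {t | Sat M t φ} s :=
  exists_congr fun _ => Strategy.achieves_iff_executions.symm

theorem sat_know_congr (hst : M.sim i s t) : Sat M s (.know i φ) ↔ Sat M t (.know i φ) :=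
  ⟨fun h u htu => h u ((M.equiv i).trans hst htu),
    fun h u hsu => h u ((M.equiv i).trans ((M.equiv i).symm hst) hsu)⟩

theorem sat_kh_congr (hst : M.sim i s t) : Sat M s (.kh i φ) ↔ Sat M t (.kh i φ) := by
  simp only [sat_kh_iff_exists_achieves, Strategy.achieves_congr hst]

theorem Sat.kh_of_know (h : Sat M s (.know i φ)) : Sat M s (.kh i φ) :=
  sat_kh_iff_exists_achieves.mpr ⟨_, Strategy.idle_achieves h⟩

theorem Sat.kh_mono (h : Sat M s (.kh i φ)) (hφψ : ∀ t, Sat M t φ → Sat M t ψ) :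
    Sat M s (.kh i ψ) :=
  let ⟨σ, hσ⟩ := sat_kh_iff_exists_achieves.mp h
  sat_kh_iff_exists_achieves.mpr ⟨σ, hσ.mono hφψ⟩

theorem Sat.kh_know (h : Sat M s (.kh i φ)) : Sat M s (.kh i (.know i φ)) :=
  let ⟨σ, hσ⟩ := sat_kh_iff_exists_achieves.mp h
  sat_kh_iff_exists_achieves.mpr ⟨σ, hσ.forall_sim⟩

theorem Sat.kh_of_kh_kh (h : Sat M s (.kh i (.kh i φ))) : Sat M s (.kh i φ) := by
  obtain ⟨σ, hσ⟩ := sat_kh_iff_exists_achieves.mp h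
  obtain ⟨τ, hτ⟩ := Strategy.exists_uniform_achieves M i {t | Sat M t φ}
  have hστ : σ.Achieves {t | τ.Achieves {t | Sat M t φ} t} s :=
    hσ.mono fun t ht => hτ t (sat_kh_iff_exists_achieves.mp ht)
  exact sat_kh_iff_exists_achieves.mpr ⟨_, hστ.andThen⟩

theorem Sat.exists_of_kh (h : Sat M s (.kh i φ)) : ∃ t, Sat M t φ :=
  let ⟨_, hσ⟩ := sat_kh_iff_exists_achieves.mp h
  hσ.nonempty

theorem Sat.exists_know_and_not_kh (h : Sat M s (.kh i ψ)) (hχ : ¬ Sat M s (.kh i χ)) :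
    ∃ t, Sat M t (.know i ψ) ∧ ¬ Sat M t (.kh i χ) := by
  by_contra! hall
  exact hχ (h.kh_know.kh_mono hall).kh_of_kh_kh

end Validities

section Satisfiability

variable {M : Model P I} {s : M.W} {Γ : Set (Formula P I)} {i : I} {φ ψ χ : Formula P I}

/-- The pointed model `(M, s)` satisfies the set of formulas `Γ`. -/
def SatSet (M : Model P I) (s : M.W) (Γ : Set (Formula P I)) : Prop :=
  ∀ φ ∈ Γ, Sat M s φ

/-- Satisfiability of a set of formulas, at a single state of some model. -/
def Satisfiable (Γ : Set (Formula P I)) : Prop :=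
  ∃ (M : Model P I) (s : M.W), SatSet M s Γ

theorem satSet_singleton : SatSet M s {φ} ↔ Sat M s φ :=
  forall_eq

theorem satSet_insert : SatSet M s (insert φ Γ) ↔ Sat M s φ ∧ SatSet M s Γ :=
  Set.forall_mem_insert

theorem Satisfiable.not_blatant (h : Satisfiable Γ) : ¬ Blatant Γ := by
  obtain ⟨_, _, hs⟩ := h
  rintro (hbot | ⟨ψ, hψ, hnψ⟩)
  · exact hs _ hbot
  · exact hs _ hnψ (hs _ hψ)

theorem SatSet.exists_mem_orOut (h : SatSet M s Γ) (hφ : φ ∈ Γ) (hun : ¬ AutoChecked Γ φ) :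
    ∃ Δ ∈ orOut Γ φ, SatSet M s Δ := by
  have extend {θ : Formula P I} {Δ : Set (Formula P I)} (hθ : Sat M s θ) (hΔ : SatSet M s Δ) :
      SatSet M s (insert θ Δ) := satSet_insert.mpr ⟨hθ, hΔ⟩
  match φ, hun, h φ hφ with
  | .bot, hun, _ | .atom _, hun, _ | .neg .bot, hun, _ | .neg (.atom _), hun, _ =>
    exact absurd trivial hun
  | .neg (.neg ψ), _, hs => exact ⟨_, rfl, extend (not_not.mp hs) h⟩
  | .and ψ χ, _, hs => exact ⟨_, rfl, extend hs.1 (extend hs.2 h)⟩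
  | .neg (.and ψ χ), _, hs =>
    by_cases hψ : Sat M s ψ
    · exact ⟨_, .inr (.inr rfl), extend hψ (extend (fun hχ => hs ⟨hψ, hχ⟩) h)⟩
    · by_cases hχ : Sat M s χ
      · exact ⟨_, .inr (.inl rfl), extend hψ (extend hχ h)⟩
      · exact ⟨_, .inl rfl, extend hψ (extend hχ h)⟩
  | .know i ψ, _, hs => exact ⟨_, rfl, extend (hs s ((M.equiv i).refl s)) h⟩
  | .neg (.know i ψ), _, _ =>
    by_cases hψ : Sat M s ψ
    · exact ⟨_, .inr rfl, extend hψ h⟩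
    · exact ⟨_, .inl rfl, extend hψ h⟩
  | .kh i ψ, _, _ =>
    by_cases hψ : Sat M s (.know i ψ)
    · exact ⟨_, .inr rfl, extend hψ h⟩
    · exact ⟨_, .inl rfl, extend hψ h⟩
  | .neg (.kh i ψ), _, hs => exact ⟨_, rfl, extend (fun hK => hs (Sat.kh_of_know hK)) h⟩

theorem Satisfiable.exists_mem_orOut (h : Satisfiable Γ) (hφ : φ ∈ Γ)
    (hun : ¬ AutoChecked Γ φ) : ∃ Δ ∈ orOut Γ φ, Satisfiable Δ :=
  let ⟨M, s, hs⟩ := h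
  let ⟨Δ, hΔ, hsΔ⟩ := hs.exists_mem_orOut hφ hun
  ⟨Δ, hΔ, M, s, hsΔ⟩

theorem Satisfiable.sigmaSet (h : Satisfiable Γ) (hψ : .neg (.know i ψ) ∈ Γ) :
    Satisfiable (SigmaSet Γ i ψ) := by
  obtain ⟨M, s, hs⟩ := h
  obtain ⟨t, hst, ht⟩ : ∃ t, M.sim i s t ∧ ¬ Sat M t ψ := by
    by_contra! hall
    exact hs _ hψ hall
  refine ⟨M, t, satSet_insert.mpr ⟨ht, ?_⟩⟩
  rintro φ ⟨hφ, ⟨χ, rfl⟩ | ⟨χ, rfl⟩ | ⟨χ, rfl⟩ | ⟨χ, rfl⟩⟩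
  · exact (sat_know_congr hst).mp (hs _ hφ)
  · exact mt (sat_know_congr hst).mpr (hs _ hφ)
  · exact (sat_kh_congr hst).mp (hs _ hφ)
  · exact mt (sat_kh_congr hst).mpr (hs _ hφ)

theorem Satisfiable.know (h : Satisfiable Γ) (hψ : .kh i ψ ∈ Γ) :
    Satisfiable {Formula.know i ψ} :=
  let ⟨M, _, hs⟩ := h
  let ⟨t, ht⟩ := (hs _ hψ).kh_know.exists_of_kh
  ⟨M, t, satSet_singleton.mpr ht⟩

theorem Satisfiable.know_neg_kh (h : Satisfiable Γ) (hψ : .kh i ψ ∈ Γ)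
    (hχ : .neg (.kh i χ) ∈ Γ) : Satisfiable {Formula.know i ψ, .neg (.kh i χ)} :=
  let ⟨M, _, hs⟩ := h
  let ⟨t, htψ, htχ⟩ := (hs _ hψ).exists_know_and_not_kh (hs _ hχ)
  ⟨M, t, satSet_insert.mpr ⟨htψ, satSet_singleton.mpr htχ⟩⟩

end Satisfiability

section Tableau

variable {T} {n m : T.Node} {φ0 : Formula P I}

theorem OrNodeCond.exists_satisfiable_child (hn : OrNodeCond T n)
    (h : Satisfiable (T.label n)) : ∃ m ∈ Children T n, Satisfiable (T.label m) := by
  obtain ⟨φ, hφ, hun, hex, -⟩ := hn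
  obtain ⟨Δ, hΔ, hsat⟩ := h.exists_mem_orOut hφ hun
  obtain ⟨m, hm, -, rfl, -⟩ := hex Δ hΔ
  exact ⟨m, hm, hsat⟩

theorem AndNodeCond.satisfiable_child (hn : AndNodeCond T n) (h : Satisfiable (T.label n))
    (hm : m ∈ Children T n) : Satisfiable (T.label m) := by
  obtain ⟨-, -, -, children_spec⟩ := hn
  rcases children_spec m hm with ⟨i, ψ, -, hψ, hlabel, -⟩ | ⟨i, ψ, -, hψ, -, hlabel⟩ |
    ⟨i, ψ, χ, -, hχ, hψ, -, hlabel⟩ <;> rw [hlabel]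
  · exact h.sigmaSet hψ
  · exact h.know hψ
  · exact h.know_neg_kh hψ hχ

theorem IsTableau.blockedBy_eq_none (hT : IsTableau φ0 T) (hn : ¬ IsLeaf T n) :
    T.blockedBy n = none :=
  not_not.mp fun hb => hn (hT.blocked_leaf n hb)

variable (T) in
/-- `n` is reached from the root through satisfiable labels: the label of `n` and those of all
its ancestors are satisfiable. -/
inductive SatBranch : T.Node → Prop
  | root : Satisfiable (T.label T.root) → SatBranch T.root
  | child {n m : T.Node} : SatBranch n → T.parent m = some n → Satisfiable (T.label m) → SatBranch m

theorem SatBranch.satisfiable (h : SatBranch T n) : Satisfiable (T.label n) := by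
  cases h <;> assumption

theorem SatBranch.parent (h : SatBranch T m) (hm : T.parent m = some n) : SatBranch T n := by
  cases h with
  | root _ => simp [T.parent_root] at hm
  | child hn hm' _ =>
    obtain rfl : _ = n := Option.some.inj (hm'.symm.trans hm)
    exact hn

theorem IsTableau.completeSubtree_satBranch (hT : IsTableau φ0 T) (h : Satisfiable {φ0}) :
    CompleteSubtree T {n | SatBranch T n} := by
  refine ⟨⟨.root (hT.root_label ▸ h), fun n hn m hm => hn.parent hm⟩,
    fun n hn hleaf hsat m hm => ?_, fun n hn hleaf hsat => ?_⟩
  · have hand : AndNodeCond T n :=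
      hT.and_node n hn.satisfiable.not_blatant (hT.blockedBy_eq_none hleaf) hsat
    exact hn.child hm (hand.satisfiable_child hn.satisfiable hm)
  · have hor : OrNodeCond T n :=
      hT.or_node n hn.satisfiable.not_blatant (hT.blockedBy_eq_none hleaf) hsat
    obtain ⟨m, hm, hmsat⟩ := hor.exists_satisfiable_child hn.satisfiable
    exact ⟨m, hm, hn.child hm hmsat⟩

end Tableau

theorem tableau_soundness_general {P I : Type} (φ0 : Formula P I)
    (hsat : ∃ (M : Model P I) (s : M.W), Sat M s φ0)
    (T : LTree P I) (hT : IsTableau φ0 T) :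
    ¬ TableauClosed T := by
  intro hclosed
  obtain ⟨M, s, hs⟩ := hsat
  have hcomplete : CompleteSubtree T {n | SatBranch T n} :=
    hT.completeSubtree_satBranch ⟨M, s, satSet_singleton.mpr hs⟩
  obtain ⟨n, hn, hblatant⟩ := hclosed _ hcomplete
  exact hn.satisfiable.not_blatant hblatant

/-- Soundness: if `φ₀` is satisfiable then the tableau for `φ₀`
is not closed. -/
theorem tableau_soundness {P I : Type} (hI : ∃ i j : I, i ≠ j)
    (φ0 : Formula P I)
    (hsat : ∃ (M : Model P I) (s : M.W), Sat M s φ0)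
    (T : LTree P I) (hT : IsTableau φ0 T) :
    ¬ TableauClosed T :=
  tableau_soundness_general φ0 hsat T hT

end ELKh
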